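/- Assume Assumptions RS and QM, that the kernel K is differentiable with a Lipschitz-continuous gradient on ℝ^d, and let (y_t)_{t∈ℕ} be the mode estimate sequence obtained by the MS iteration starting from y₁ with f(y₁) > 0. Then there exists a constant c̄ > 0 such that the relative error condition ‖y_{t+1} − y_t‖ ≥ c̄·‖∇f(y_{t+1})‖ holds for every t ∈ ℕ; in fact one can take c̄ = h^{d+2}/(C₂ + C₃) where C₂ > 0 bounds Ǩ from above and C₃ ≥ 0 is a Lipschitz constant of ∇K. -/

import Mathlib

open Set Filter Topology MeasureTheory
open scoped BigOperators RealInnerProductSpace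

noncomputable section

/-- Euclidean space `ℝ^d`. -/
abbrev Euc (d : ℕ) := EuclideanSpace ℝ (Fin d)

/-- The convex subdifferential of a function `g` (viewed as a function on `[0,∞)`) at `u`. -/
def subdiffIci (g : ℝ → ℝ) (u : ℝ) : Set ℝ :=
  {c : ℝ | ∀ v ∈ Set.Ici (0:ℝ), g v - g u ≥ c * (v - u)}

/-- Assumption RS: the kernel `K` is bounded, continuous, non-negative, normalized, and
radially symmetric with profile `Khat`. -/
structure AssumptionRS (d : ℕ) (K : Euc d → ℝ) (Khat : ℝ → ℝ) : Prop where
  bounded : ∃ M : ℝ, ∀ x, K x ≤ M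
  cont : Continuous K
  nonneg : ∀ x, 0 ≤ K x
  normalized : ∫ x, K x = 1
  radial : ∀ x, K x = Khat (‖x‖ ^ 2 / 2)

/-- Assumption QM for the profile `Khat`, together with the selection `Kcheck`:
`Khat` is convex and non-increasing on `[0,∞)`, its right derivative at `0` exists as a real
number and equals `-(Kcheck 0)` (i.e. `Kcheck 0 = -Khat'(0+) > -∞`), and for every `u > 0`,
`-(Kcheck u)` belongs to the subdifferential of `Khat` at `u`. -/
structure AssumptionQM (Khat Kcheck : ℝ → ℝ) : Prop where
  convexOn : ConvexOn ℝ (Set.Ici (0:ℝ)) Khat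
  antitoneOn : AntitoneOn Khat (Set.Ici (0:ℝ))
  rderiv0 : Filter.Tendsto (fun v => (Khat v - Khat 0) / v)
      (nhdsWithin 0 (Set.Ioi 0)) (nhds (-(Kcheck 0)))
  subdiff : ∀ u : ℝ, 0 < u → -(Kcheck u) ∈ subdiffIci Khat u

/-- The kernel density estimate `f(y) = (1/(n hᵈ)) ∑ᵢ K((y - xᵢ)/h)`. -/
def KDE (d n : ℕ) (K : Euc d → ℝ) (x : Fin n → Euc d) (h : ℝ) (y : Euc d) : ℝ :=
  (1 / ((n : ℝ) * h ^ d)) * ∑ i : Fin n, K (h⁻¹ • (y - x i))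

/-- `f̌(y) = (1/(n hᵈ)) ∑ᵢ Ǩ(‖(y - xᵢ)/h‖²/2)`. -/
def fcheck (d n : ℕ) (Kcheck : ℝ → ℝ) (x : Fin n → Euc d) (h : ℝ) (y : Euc d) : ℝ :=
  (1 / ((n : ℝ) * h ^ d)) * ∑ i : Fin n, Kcheck (‖h⁻¹ • (y - x i)‖ ^ 2 / 2)

/-- The mean shift vector `m(y)`: zero if `f̌(y) = 0`, and otherwise
`m(y) = ∑ᵢ Ǩ(‖(y - xᵢ)/h‖²/2)(xᵢ - y) / ∑ᵢ Ǩ(‖(y - xᵢ)/h‖²/2)`. -/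
def msMap (d n : ℕ) (Kcheck : ℝ → ℝ) (x : Fin n → Euc d) (h : ℝ) (y : Euc d) : Euc d :=
  if fcheck d n Kcheck x h y = 0 then 0
  else (∑ i : Fin n, Kcheck (‖h⁻¹ • (y - x i)‖ ^ 2 / 2))⁻¹ •
    ∑ i : Fin n, Kcheck (‖h⁻¹ • (y - x i)‖ ^ 2 / 2) • (x i - y)

/-- `y` is a mean shift iteration sequence: `y (t+1) = y t + m (y t)` for all `t`. -/
def MSSeq (d n : ℕ) (Kcheck : ℝ → ℝ) (x : Fin n → Euc d) (h : ℝ) (y : ℕ → Euc d) : Prop :=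
  ∀ t : ℕ, y (t + 1) = y t + msMap d n Kcheck x h (y t)

/-- `f` has the Łojasiewicz property on the set `S`. -/
def LojasiewiczOn (d : ℕ) (f : Euc d → ℝ) (S : Set (Euc d)) : Prop :=
  ∃ ε > (0:ℝ), ∃ c > (0:ℝ), ∃ θ ∈ Set.Ico (0:ℝ) 1,
    ∀ x' ∈ S, ∀ x ∈ S, ‖x' - x‖ < ε → 0 ≤ f x' - f x →
      ‖gradient f x‖ ≥ c * (f x' - f x) ^ θ

/-- `f` satisfies the Łojasiewicz inequality at `ybar` with exponent `θ`, on the set `S`. -/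
def LojasiewiczAtWith (d : ℕ) (f : Euc d → ℝ) (S : Set (Euc d)) (ybar : Euc d) (θ : ℝ) : Prop :=
  ∃ ε > (0:ℝ), ∃ c > (0:ℝ),
    ∀ y ∈ S, ‖ybar - y‖ < ε → 0 ≤ f ybar - f y →
      ‖gradient f y‖ ≥ c * (f ybar - f y) ^ θ

/-!
If `c` is a subgradient of `Khat` at `‖z‖² / 2`, then `w ↦ K w - c ‖w‖² / 2` is minimal at `z`, so
`∇K z = c z`; summing over the data points gives the gradient identity `∇f = (f̌ / h²) m`. Since
`0 ≤ f̌ ≤ C₂ / hᵈ`, the gradient at `y_t` is at most `C₂ / h^(d+2)` times the step `‖m(y_t)‖`, and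
moving to `y_{t+1}` changes it by at most `C₃ / h^(d+2)` times the same step, because `∇f` inherits
a Lipschitz constant from `∇K`.
-/

section Subdifferential

variable {g : ℝ → ℝ} {u v c c' : ℝ}

lemma nonpos_of_mem_subdiffIci (hg : AntitoneOn g (Ici 0)) (hu : 0 ≤ u)
    (hc : c ∈ subdiffIci g u) : c ≤ 0 := by
  have hu' : 0 ≤ u + 1 := by linarith
  have hsub : c * (u + 1 - u) ≤ g (u + 1) - g u := hc (u + 1) hu'
  have hanti : g (u + 1) ≤ g u := hg hu hu' (by linarith)
  linarith

lemma le_of_mem_subdiffIci (hu : 0 ≤ u) (huv : u < v) (hc : c ∈ subdiffIci g u)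
    (hc' : c' ∈ subdiffIci g v) : c ≤ c' := by
  have h₁ : c * (v - u) ≤ g v - g u := hc v (hu.trans huv.le)
  have h₂ : c' * (u - v) ≤ g u - g v := hc' u hu
  refine le_of_mul_le_mul_right ?_ (sub_pos.2 huv)
  linarith

lemma mem_subdiffIci_zero_of_hasDerivWithinAt (hg : ConvexOn ℝ (Ici 0) g)
    (hc : HasDerivWithinAt g c (Ioi 0) 0) : c ∈ subdiffIci g 0 := by
  intro v hv
  rcases (mem_Ici.1 hv).eq_or_lt with rfl | hv₀
  · simp
  · have hslope : c ≤ slope g 0 v :=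
      hg.le_slope_of_hasDerivWithinAt_Ioi self_mem_Ici hv hv₀ hc
    rwa [slope_def_field, le_div_iff₀ (sub_pos.2 hv₀)] at hslope

end Subdifferential

namespace AssumptionQM

variable {Khat Kcheck : ℝ → ℝ} {u : ℝ}

lemma hasDerivWithinAt_zero (hQM : AssumptionQM Khat Kcheck) :
    HasDerivWithinAt Khat (-Kcheck 0) (Ioi 0) 0 := by
  rw [hasDerivWithinAt_iff_tendsto_slope' self_notMem_Ioi]
  refine hQM.rderiv0.congr fun v => ?_
  rw [slope_def_field, sub_zero]

lemma neg_mem_subdiffIci (hQM : AssumptionQM Khat Kcheck) (hu : 0 ≤ u) :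
    -Kcheck u ∈ subdiffIci Khat u := by
  rcases hu.eq_or_lt with rfl | hu
  · exact mem_subdiffIci_zero_of_hasDerivWithinAt hQM.convexOn hQM.hasDerivWithinAt_zero
  · exact hQM.subdiff u hu

lemma Kcheck_nonneg (hQM : AssumptionQM Khat Kcheck) (hu : 0 ≤ u) : 0 ≤ Kcheck u :=
  neg_nonpos.1 (nonpos_of_mem_subdiffIci hQM.antitoneOn hu (hQM.neg_mem_subdiffIci hu))

lemma antitoneOn_Kcheck (hQM : AssumptionQM Khat Kcheck) : AntitoneOn Kcheck (Ici 0) := by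
  intro u hu v hv huv
  rcases huv.eq_or_lt with rfl | huv
  · rfl
  · exact neg_le_neg_iff.1
      (le_of_mem_subdiffIci hu huv (hQM.neg_mem_subdiffIci hu) (hQM.neg_mem_subdiffIci hv))

end AssumptionQM

section Gradient

variable {E : Type*} [NormedAddCommGroup E] [InnerProductSpace ℝ E] [CompleteSpace E]

lemma gradient_eq_smul_of_mem_subdiffIci {K : E → ℝ} {g : ℝ → ℝ} {c : ℝ} {z : E}
    (hradial : ∀ w, K w = g (‖w‖ ^ 2 / 2)) (hK : DifferentiableAt ℝ K z)
    (hc : c ∈ subdiffIci g (‖z‖ ^ 2 / 2)) : gradient K z = c • z := by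
  have hmin : IsLocalMin (fun w => K w - c / 2 * ‖w‖ ^ 2) z := .of_forall fun w => by
    have hsub : c * (‖w‖ ^ 2 / 2 - ‖z‖ ^ 2 / 2) ≤ g (‖w‖ ^ 2 / 2) - g (‖z‖ ^ 2 / 2) :=
      hc _ (mem_Ici.2 (by positivity))
    simp only [hradial]
    linarith
  have hcrit := hmin.hasFDerivAt_eq_zero <|
    hK.hasFDerivAt.sub ((hasStrictFDerivAt_norm_sq z).hasFDerivAt.const_mul (c / 2))
  refine ext_inner_right ℝ fun v => ?_
  have hv : fderiv ℝ K z v = c / 2 * (2 * ⟪z, v⟫) := by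
    simpa [sub_eq_zero] using DFunLike.congr_fun hcrit v
  rw [inner_gradient_left, hv, real_inner_smul_left]
  ring

lemma hasGradientAt_comp_smul_sub {K : E → ℝ} {c : ℝ} {a y : E}
    (hK : DifferentiableAt ℝ K (c • (y - a))) :
    HasGradientAt (fun w => K (c • (w - a))) (c • gradient K (c • (y - a))) y := by
  have hchain : HasFDerivAt (fun w => K (c • (w - a))) _ y :=
    hK.hasFDerivAt.comp y (((hasFDerivAt_id y).sub_const a).const_smul c)
  refine hasGradientAt_iff_hasFDerivAt.2 (hchain.congr_fderiv ?_)
  ext v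
  simp

end Gradient

section KernelDensityEstimate

variable {d n : ℕ} {K : Euc d → ℝ} {Khat Kcheck : ℝ → ℝ} {x : Fin n → Euc d} {h C : ℝ}

lemma gradient_KDE (hK : Differentiable ℝ K) (y : Euc d) :
    gradient (KDE d n K x h) y =
      (1 / (n * h ^ d)) • ∑ i, h⁻¹ • gradient K (h⁻¹ • (y - x i)) := by
  have hsum : HasFDerivAt (KDE d n K x h) _ y :=
    (HasFDerivAt.fun_sum fun i (_ : i ∈ Finset.univ) =>
      (hasGradientAt_comp_smul_sub (a := x i) (hK _)).hasFDerivAt).const_mul (1 / (n * h ^ d))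
  refine HasGradientAt.gradient (hasGradientAt_iff_hasFDerivAt.2 (hsum.congr_fderiv ?_))
  simp only [map_smulₛₗ, map_sum, conj_trivial]

lemma norm_gradient_KDE_sub_le (hn : 0 < n) (hh : 0 < h) (hK : Differentiable ℝ K) {L : NNReal}
    (hL : LipschitzWith L (gradient K)) (a b : Euc d) :
    ‖gradient (KDE d n K x h) a - gradient (KDE d n K x h) b‖ ≤ L / h ^ (d + 2) * ‖a - b‖ := by
  have hterm (i : Fin n) :
      ‖h⁻¹ • gradient K (h⁻¹ • (a - x i)) - h⁻¹ • gradient K (h⁻¹ • (b - x i))‖ ≤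
        h⁻¹ * (L * (h⁻¹ * ‖a - b‖)) := by
    have hdist : ‖h⁻¹ • (a - x i) - h⁻¹ • (b - x i)‖ = h⁻¹ * ‖a - b‖ := by
      rw [← smul_sub, sub_sub_sub_cancel_right, norm_smul_of_nonneg (by positivity)]
    rw [← smul_sub, norm_smul_of_nonneg (by positivity), ← hdist]
    gcongr
    exact hL.norm_sub_le _ _
  rw [gradient_KDE hK, gradient_KDE hK, ← smul_sub, ← Finset.sum_sub_distrib,
    norm_smul_of_nonneg (by positivity)]
  calc 1 / (n * h ^ d) * ‖∑ i, (h⁻¹ • gradient K (h⁻¹ • (a - x i)) -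
          h⁻¹ • gradient K (h⁻¹ • (b - x i)))‖
      ≤ 1 / (n * h ^ d) * ∑ _i : Fin n, h⁻¹ * (L * (h⁻¹ * ‖a - b‖)) := by
        gcongr
        exact norm_sum_le_of_le _ fun i _ => hterm i
    _ = L / h ^ (d + 2) * ‖a - b‖ := by
        rw [Finset.sum_const, Finset.card_univ, Fintype.card_fin, nsmul_eq_mul]
        field_simp
        ring

lemma fcheck_nonneg (hh : 0 ≤ h) (hKcheck : ∀ u, 0 ≤ u → 0 ≤ Kcheck u) (y : Euc d) :
    0 ≤ fcheck d n Kcheck x h y :=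
  mul_nonneg (by positivity) (Finset.sum_nonneg fun _ _ => hKcheck _ (by positivity))

lemma fcheck_le (hn : 0 < n) (hh : 0 < h) (hC : ∀ u, 0 ≤ u → Kcheck u ≤ C) (y : Euc d) :
    fcheck d n Kcheck x h y ≤ C / h ^ d := by
  have hsum : ∑ i, Kcheck (‖h⁻¹ • (y - x i)‖ ^ 2 / 2) ≤ n * C := by
    simpa using Finset.sum_le_card_nsmul Finset.univ _ C fun i _ =>
      hC (‖h⁻¹ • (y - x i)‖ ^ 2 / 2) (by positivity)
  calc fcheck d n Kcheck x h y ≤ 1 / (n * h ^ d) * (n * C) := by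
        unfold fcheck
        gcongr
    _ = C / h ^ d := by field_simp

lemma fcheck_smul_msMap (hKcheck : ∀ u, 0 ≤ u → 0 ≤ Kcheck u) (y : Euc d) :
    fcheck d n Kcheck x h y • msMap d n Kcheck x h y =
      (1 / (n * h ^ d)) • ∑ i, Kcheck (‖h⁻¹ • (y - x i)‖ ^ 2 / 2) • (x i - y) := by
  rw [msMap]
  split_ifs with hf
  · rw [smul_zero, eq_comm, smul_eq_zero]
    -- The weights are non-negative, so a vanishing sum forces each of them to vanish.
    refine (mul_eq_zero.1 hf).imp_right fun hsum => Finset.sum_eq_zero fun i hi => ?_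
    rw [Finset.sum_eq_zero_iff_of_nonneg fun i _ => hKcheck _ (by positivity)] at hsum
    rw [hsum i hi, zero_smul]
  · rw [fcheck, mul_smul, smul_inv_smul₀ (right_ne_zero_of_mul hf)]

lemma gradient_KDE_eq_smul_msMap (hradial : ∀ z, K z = Khat (‖z‖ ^ 2 / 2))
    (hQM : AssumptionQM Khat Kcheck) (hK : Differentiable ℝ K) (y : Euc d) :
    gradient (KDE d n K x h) y =
      (fcheck d n Kcheck x h y / h ^ 2) • msMap d n Kcheck x h y := by
  have hgrad (z : Euc d) : gradient K z = -Kcheck (‖z‖ ^ 2 / 2) • z :=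
    gradient_eq_smul_of_mem_subdiffIci hradial (hK z) (hQM.neg_mem_subdiffIci (by positivity))
  have hterm (i : Fin n) : h⁻¹ • gradient K (h⁻¹ • (y - x i)) =
      (h ^ 2)⁻¹ • Kcheck (‖h⁻¹ • (y - x i)‖ ^ 2 / 2) • (x i - y) := by
    rw [hgrad, ← neg_sub (x i) y]
    module
  simp only [gradient_KDE hK, hterm, ← Finset.smul_sum]
  rw [smul_comm, ← fcheck_smul_msMap fun _ hu => hQM.Kcheck_nonneg hu, smul_smul, div_eq_inv_mul]

lemma norm_gradient_KDE_le (hn : 0 < n) (hh : 0 < h) (hradial : ∀ z, K z = Khat (‖z‖ ^ 2 / 2))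
    (hQM : AssumptionQM Khat Kcheck) (hK : Differentiable ℝ K)
    (hC : ∀ u, 0 ≤ u → Kcheck u ≤ C) (y : Euc d) :
    ‖gradient (KDE d n K x h) y‖ ≤ C / h ^ (d + 2) * ‖msMap d n Kcheck x h y‖ := by
  have hf : 0 ≤ fcheck d n Kcheck x h y := fcheck_nonneg hh.le (fun _ hu => hQM.Kcheck_nonneg hu) y
  rw [gradient_KDE_eq_smul_msMap hradial hQM hK, norm_smul_of_nonneg (by positivity), pow_add,
    ← div_div]
  gcongr
  exact fcheck_le hn hh hC y

lemma norm_gradient_KDE_add_msMap_le (hn : 0 < n) (hh : 0 < h)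
    (hradial : ∀ z, K z = Khat (‖z‖ ^ 2 / 2)) (hQM : AssumptionQM Khat Kcheck)
    (hK : Differentiable ℝ K) (hC : ∀ u, 0 ≤ u → Kcheck u ≤ C) {L : NNReal}
    (hL : LipschitzWith L (gradient K)) (y : Euc d) :
    ‖gradient (KDE d n K x h) (y + msMap d n Kcheck x h y)‖ ≤
      (C + L) / h ^ (d + 2) * ‖msMap d n Kcheck x h y‖ := by
  set m := msMap d n Kcheck x h y
  have hstart : ‖gradient (KDE d n K x h) y‖ ≤ C / h ^ (d + 2) * ‖m‖ :=
    norm_gradient_KDE_le hn hh hradial hQM hK hC y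
  have hchange : ‖gradient (KDE d n K x h) (y + m) - gradient (KDE d n K x h) y‖ ≤
      L / h ^ (d + 2) * ‖m‖ := by
    simpa only [add_sub_cancel_left] using
      norm_gradient_KDE_sub_le (x := x) hn hh hK hL (y + m) y
  calc ‖gradient (KDE d n K x h) (y + m)‖
      ≤ ‖gradient (KDE d n K x h) y‖ +
          ‖gradient (KDE d n K x h) (y + m) - gradient (KDE d n K x h) y‖ :=
        norm_le_norm_add_norm_sub' _ _
    _ ≤ C / h ^ (d + 2) * ‖m‖ + L / h ^ (d + 2) * ‖m‖ := add_le_add hstart hchange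
    _ = (C + L) / h ^ (d + 2) * ‖m‖ := by ring

end KernelDensityEstimate

theorem ms_relative_error_condition_general
    {d n : ℕ} (hn : 0 < n) {K : Euc d → ℝ} {Khat Kcheck : ℝ → ℝ}
    (hradial : ∀ z, K z = Khat (‖z‖ ^ 2 / 2)) (hQM : AssumptionQM Khat Kcheck)
    {x : Fin n → Euc d} {h : ℝ} (hh : 0 < h) (hK : Differentiable ℝ K)
    (hKLip : ∃ L : NNReal, LipschitzWith L (gradient K))
    {y : ℕ → Euc d} (hy : MSSeq d n Kcheck x h y) :
    (∃ cbar : ℝ, 0 < cbar ∧ ∀ t : ℕ,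
        cbar * ‖gradient (KDE d n K x h) (y (t + 1))‖ ≤ ‖y (t + 1) - y t‖) ∧
    ∀ C₂ C₃ : ℝ, 0 < C₂ → 0 ≤ C₃ → (∀ u : ℝ, 0 ≤ u → Kcheck u ≤ C₂) →
      LipschitzWith C₃.toNNReal (gradient K) →
      ∀ t : ℕ,
        h ^ (d + 2) / (C₂ + C₃) * ‖gradient (KDE d n K x h) (y (t + 1))‖ ≤
          ‖y (t + 1) - y t‖ := by
  have explicit {C : ℝ} {L : NNReal} (hC₀ : 0 < C) (hC : ∀ u, 0 ≤ u → Kcheck u ≤ C)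
      (hL : LipschitzWith L (gradient K)) (t : ℕ) :
      h ^ (d + 2) / (C + L) * ‖gradient (KDE d n K x h) (y (t + 1))‖ ≤ ‖y (t + 1) - y t‖ := by
    rw [hy t, add_sub_cancel_left, ← inv_div, inv_mul_le_iff₀ (by positivity)]
    exact norm_gradient_KDE_add_msMap_le hn hh hradial hQM hK hC hL (y t)
  refine ⟨?_, fun C₂ C₃ hC₂ hC₃ hC hL t => ?_⟩
  · obtain ⟨L, hL⟩ := hKLip
    have hKcheck₀ : 0 ≤ Kcheck 0 := hQM.Kcheck_nonneg le_rfl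
    -- `Kcheck 0` bounds `Kcheck` but may vanish; adding `1` makes the bound positive.
    exact ⟨h ^ (d + 2) / (Kcheck 0 + 1 + L), by positivity, explicit (by positivity)
      (fun u hu => (hQM.antitoneOn_Kcheck self_mem_Ici hu hu).trans (by linarith)) hL⟩
  · simpa only [Real.coe_toNNReal _ hC₃] using explicit hC₂ hC hL t

/-- Under Assumptions RS and QM with `K` differentiable with Lipschitz-continuous
gradient, starting from `y 0` with `f (y 0) > 0`, there exists `c̄ > 0` such that the relative
error condition `‖y_{t+1} − y_t‖ ≥ c̄‖∇f(y_{t+1})‖` holds for every `t`; in fact one can take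
`c̄ = h^{d+2}/(C₂ + C₃)` where `C₂ > 0` bounds `Ǩ` from above and `C₃ ≥ 0` is a Lipschitz
constant of `∇K`. -/
theorem ms_relative_error_condition
    (d n : ℕ) (hd : 0 < d) (hn : 0 < n)
    (K : Euc d → ℝ) (Khat Kcheck : ℝ → ℝ)
    (hRS : AssumptionRS d K Khat) (hQM : AssumptionQM Khat Kcheck)
    (x : Fin n → Euc d) (h : ℝ) (hh : 0 < h)
    (hK : Differentiable ℝ K)
    (hKLip : ∃ L : NNReal, LipschitzWith L (gradient K))
    (y : ℕ → Euc d) (hy : MSSeq d n Kcheck x h y)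
    (hy0 : 0 < KDE d n K x h (y 0)) :
    (∃ cbar : ℝ, 0 < cbar ∧ ∀ t : ℕ,
        cbar * ‖gradient (KDE d n K x h) (y (t + 1))‖ ≤ ‖y (t + 1) - y t‖) ∧
    ∀ C₂ C₃ : ℝ, 0 < C₂ → 0 ≤ C₃ → (∀ u : ℝ, 0 ≤ u → Kcheck u ≤ C₂) →
      LipschitzWith C₃.toNNReal (gradient K) →
      ∀ t : ℕ,
        h ^ (d + 2) / (C₂ + C₃) * ‖gradient (KDE d n K x h) (y (t + 1))‖ ≤
          ‖y (t + 1) - y t‖ := by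
  exact ms_relative_error_condition_general hn hRS.radial hQM hh hK hKLip hy
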